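/- Let ε̄ ∈ int(E). Suppose that for every sequence {ε_k} ⊆ int(E) with ε_k → ε̄ there exists a sequence of optimal solutions (X(ε_k), y(ε_k), S(ε_k)) of (P_{ε_k}) and (D_{ε_k}) converging to some strictly complementary optimal solution (X*(ε̄), y*(ε̄), S*(ε̄)) of (P_{ε̄}) and (D_{ε̄}). Then there exists ξ > 0 with (ε̄−ξ, ε̄+ξ) ⊆ int(E) such that for every ε ∈ (ε̄−ξ, ε̄+ξ) the problems (P_ε) and (D_ε) admit a strictly complementary optimal solution and dim B(ε) = dim B(ε̄) and dim N(ε) = dim N(ε̄); in particular ε̄ belongs to an open interval on which dim B(·) and dim N(·) are constant. -/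

import Mathlib

open Matrix Set

noncomputable section

variable {n m : ℕ}

/-- Feasibility for the primal SDO problem `(P_ε)` (the feasible set does not depend on `ε`). -/
def PrimalFeasible (A : Fin m → Matrix (Fin n) (Fin n) ℝ) (b : Fin m → ℝ)
    (X : Matrix (Fin n) (Fin n) ℝ) : Prop :=
  X.IsSymm ∧ (∀ i, ((A i) * X).trace = b i) ∧ X.PosSemidef

/-- Feasibility for the dual SDO problem `(D_ε)`. -/
def DualFeasible (C Cbar : Matrix (Fin n) (Fin n) ℝ)
    (A : Fin m → Matrix (Fin n) (Fin n) ℝ) (ε : ℝ)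
    (y : Fin m → ℝ) (S : Matrix (Fin n) (Fin n) ℝ) : Prop :=
  S.IsSymm ∧ (∑ i, y i • A i) + S = C + ε • Cbar ∧ S.PosSemidef

/-- The optimal value function `v(ε)` of `(P_ε)`, with values in `EReal`. -/
def vfun (C Cbar : Matrix (Fin n) (Fin n) ℝ) (A : Fin m → Matrix (Fin n) (Fin n) ℝ)
    (b : Fin m → ℝ) (ε : ℝ) : EReal :=
  sInf ((fun X => (((C + ε • Cbar) * X).trace : EReal)) '' {X | PrimalFeasible A b X})

/-- `E = {ε : v(ε) > -∞}`. -/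
def Eset (C Cbar : Matrix (Fin n) (Fin n) ℝ) (A : Fin m → Matrix (Fin n) (Fin n) ℝ)
    (b : Fin m → ℝ) : Set ℝ :=
  {ε | ⊥ < vfun C Cbar A b ε}

/-- The primal optimal set `P*(ε)`. -/
def PrimalOpt (C Cbar : Matrix (Fin n) (Fin n) ℝ) (A : Fin m → Matrix (Fin n) (Fin n) ℝ)
    (b : Fin m → ℝ) (ε : ℝ) : Set (Matrix (Fin n) (Fin n) ℝ) :=
  {X | PrimalFeasible A b X ∧ ∀ X', PrimalFeasible A b X' →
    ((C + ε • Cbar) * X).trace ≤ ((C + ε • Cbar) * X').trace}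

/-- The dual optimal set `D*(ε)`. -/
def DualOpt (C Cbar : Matrix (Fin n) (Fin n) ℝ) (A : Fin m → Matrix (Fin n) (Fin n) ℝ)
    (b : Fin m → ℝ) (ε : ℝ) : Set ((Fin m → ℝ) × Matrix (Fin n) (Fin n) ℝ) :=
  {p | DualFeasible C Cbar A ε p.1 p.2 ∧ ∀ y' S', DualFeasible C Cbar A ε y' S' →
    ∑ i, b i * y' i ≤ ∑ i, b i * p.1 i}

/-- A maximally complementary optimal solution: `X` lies in the relative interior of `P*(ε)`
and `(y, S)` in the relative interior of `D*(ε)`. -/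
def MaxComp (C Cbar : Matrix (Fin n) (Fin n) ℝ) (A : Fin m → Matrix (Fin n) (Fin n) ℝ)
    (b : Fin m → ℝ) (ε : ℝ) (X : Matrix (Fin n) (Fin n) ℝ) (y : Fin m → ℝ)
    (S : Matrix (Fin n) (Fin n) ℝ) : Prop :=
  X ∈ intrinsicInterior ℝ (PrimalOpt C Cbar A b ε) ∧
    (y, S) ∈ intrinsicInterior ℝ (DualOpt C Cbar A b ε)

/-- `π(ε) = π(ε')`: the optimal partitions at `ε` and `ε'` coincide, expressed through
maximally complementary solutions (`B = range X*`, `N = range S*`, `T` being determined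
by `B` and `N`). -/
def SamePartition (C Cbar : Matrix (Fin n) (Fin n) ℝ) (A : Fin m → Matrix (Fin n) (Fin n) ℝ)
    (b : Fin m → ℝ) (ε ε' : ℝ) : Prop :=
  ∃ X y S X' y' S', MaxComp C Cbar A b ε X y S ∧ MaxComp C Cbar A b ε' X' y' S' ∧
    LinearMap.range X.mulVecLin = LinearMap.range X'.mulVecLin ∧
    LinearMap.range S.mulVecLin = LinearMap.range S'.mulVecLin

/-- The standing assumptions: symmetric data, linearly independent constraint matrices and
the interior point condition at `ε = 0`. -/
def StandingAssumptions (C Cbar : Matrix (Fin n) (Fin n) ℝ)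
    (A : Fin m → Matrix (Fin n) (Fin n) ℝ) (b : Fin m → ℝ) : Prop :=
  C.IsSymm ∧ Cbar.IsSymm ∧ (∀ i, (A i).IsSymm) ∧ LinearIndependent ℝ A ∧
    ∃ X y S, PrimalFeasible A b X ∧ X.PosDef ∧ DualFeasible C Cbar A 0 y S ∧ S.PosDef

/-- The invariancy set of `ε̄`. -/
def InvSet (C Cbar : Matrix (Fin n) (Fin n) ℝ) (A : Fin m → Matrix (Fin n) (Fin n) ℝ)
    (b : Fin m → ℝ) (εbar : ℝ) : Set ℝ :=
  {ε | ε ∈ interior (Eset C Cbar A b) ∧ SamePartition C Cbar A b ε εbar}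

/-- `dim B(ε) = dim B(ε')` and `dim N(ε) = dim N(ε')`, expressed through maximally
complementary solutions. -/
def DimsMatch (C Cbar : Matrix (Fin n) (Fin n) ℝ) (A : Fin m → Matrix (Fin n) (Fin n) ℝ)
    (b : Fin m → ℝ) (ε ε' : ℝ) : Prop :=
  ∀ X y S X' y' S', MaxComp C Cbar A b ε X y S → MaxComp C Cbar A b ε' X' y' S' →
    Module.finrank ℝ (LinearMap.range X.mulVecLin) =
        Module.finrank ℝ (LinearMap.range X'.mulVecLin) ∧
      Module.finrank ℝ (LinearMap.range S.mulVecLin) =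
        Module.finrank ℝ (LinearMap.range S'.mulVecLin)

/-- A transition point: a singleton invariancy set such that every neighborhood contains a
parameter at which `dim B` or `dim N` differs. -/
def IsTransitionPoint (C Cbar : Matrix (Fin n) (Fin n) ℝ) (A : Fin m → Matrix (Fin n) (Fin n) ℝ)
    (b : Fin m → ℝ) (εbar : ℝ) : Prop :=
  εbar ∈ interior (Eset C Cbar A b) ∧
    (∀ ε ∈ interior (Eset C Cbar A b), ε ≠ εbar → ¬ SamePartition C Cbar A b ε εbar) ∧
    ∀ ξ : ℝ, 0 < ξ → ∃ ε ∈ Set.Ioo (εbar - ξ) (εbar + ξ) ∩ interior (Eset C Cbar A b),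
      ¬ DimsMatch C Cbar A b ε εbar

/-- Existence of a strictly complementary optimal solution at `ε`. -/
def HasStrictComp (C Cbar : Matrix (Fin n) (Fin n) ℝ) (A : Fin m → Matrix (Fin n) (Fin n) ℝ)
    (b : Fin m → ℝ) (ε : ℝ) : Prop :=
  ∃ X y S, X ∈ PrimalOpt C Cbar A b ε ∧ (y, S) ∈ DualOpt C Cbar A b ε ∧ (X + S).PosDef

/-- Nonsingularity of the Jacobian `J(X, y, S)` of the optimality system, as a linear map on
`S^n × ℝ^m × S^n`: only the trivial symmetric triple is mapped to zero. -/
def JNonsingular (A : Fin m → Matrix (Fin n) (Fin n) ℝ)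
    (X S : Matrix (Fin n) (Fin n) ℝ) : Prop :=
  ∀ (DX DS : Matrix (Fin n) (Fin n) ℝ) (Dy : Fin m → ℝ), DX.IsSymm → DS.IsSymm →
    (∀ i, ((A i) * DX).trace = 0) → ((∑ i, Dy i • A i) + DS = 0) →
    (DX * S + S * DX + X * DS + DS * X = 0) → DX = 0 ∧ Dy = 0 ∧ DS = 0

/-- Primal nondegeneracy of a primal feasible `X`. -/
def PrimalNondeg (A : Fin m → Matrix (Fin n) (Fin n) ℝ)
    (X : Matrix (Fin n) (Fin n) ℝ) : Prop :=
  ∃ (r : ℕ) (M₁ : Matrix (Fin n) (Fin r) ℝ) (M₂ : Matrix (Fin n) (Fin (n - r)) ℝ),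
    M₁ᵀ * M₁ = 1 ∧ M₂ᵀ * M₂ = 1 ∧ M₁ᵀ * M₂ = 0 ∧
    LinearMap.range M₁.mulVecLin = LinearMap.range X.mulVecLin ∧
    LinearIndependent ℝ (fun i =>
      Matrix.fromBlocks (M₁ᵀ * (A i) * M₁) (M₁ᵀ * (A i) * M₂) (M₂ᵀ * (A i) * M₁) 0)

/-- Dual nondegeneracy of a dual feasible `(y, S)` (the condition involves only `S`). -/
def DualNondeg (A : Fin m → Matrix (Fin n) (Fin n) ℝ)
    (S : Matrix (Fin n) (Fin n) ℝ) : Prop :=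
  ∃ (k : ℕ) (N₁ : Matrix (Fin n) (Fin k) ℝ),
    N₁ᵀ * N₁ = 1 ∧ LinearMap.range N₁.mulVecLin = LinearMap.ker S.mulVecLin ∧
    ∀ W : Matrix (Fin k) (Fin k) ℝ, W.IsSymm →
      W ∈ Submodule.span ℝ (Set.range fun i => N₁ᵀ * (A i) * N₁)

/-- A central solution with parameter `μ` for the problems `(P_ε)` and `(D_ε)`. -/
def CentralSol (C Cbar : Matrix (Fin n) (Fin n) ℝ) (A : Fin m → Matrix (Fin n) (Fin n) ℝ)
    (b : Fin m → ℝ) (ε μ : ℝ) (X : Matrix (Fin n) (Fin n) ℝ) (y : Fin m → ℝ)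
    (S : Matrix (Fin n) (Fin n) ℝ) : Prop :=
  PrimalFeasible A b X ∧ DualFeasible C Cbar A ε y S ∧
    X * S = μ • (1 : Matrix (Fin n) (Fin n) ℝ)

/-- The Frobenius norm of a matrix. -/
def frobNorm {α β : Type*} [Fintype α] [Fintype β] (M : Matrix α β ℝ) : ℝ :=
  Real.sqrt (∑ i, ∑ j, (M i j) ^ 2)

/-- The spectral norm (induced 2-norm) of a square matrix. -/
def specNorm {N : ℕ} (M : Matrix (Fin N) (Fin N) ℝ) : ℝ :=
  ‖LinearMap.toContinuousLinearMap (Matrix.toEuclideanLin M)‖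

/-- The smallest eigenvalue of a symmetric matrix, via the Rayleigh quotient. -/
def lamMin {k : ℕ} (M : Matrix (Fin k) (Fin k) ℝ) : ℝ :=
  sInf {r : ℝ | ∃ x : Fin k → ℝ, (∑ i, (x i) ^ 2) = 1 ∧ r = x ⬝ᵥ M.mulVec x}

/-- `θ^μ`: the operator norm of the inverse of the Jacobian `J(X, y, S)` on
`S^n × ℝ^m × S^n`, characterized as the least constant `t ≥ 0` with
`‖(ΔX, Δy, ΔS)‖ ≤ t * ‖J(X,y,S)(ΔX, Δy, ΔS)‖` for all symmetric `ΔX`, `ΔS`. -/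
def thetaMu (A : Fin m → Matrix (Fin n) (Fin n) ℝ)
    (X S : Matrix (Fin n) (Fin n) ℝ) : ℝ :=
  sInf {t : ℝ | 0 ≤ t ∧ ∀ (DX DS : Matrix (Fin n) (Fin n) ℝ) (Dy : Fin m → ℝ),
    DX.IsSymm → DS.IsSymm →
    Real.sqrt (frobNorm DX ^ 2 + (∑ i, (Dy i) ^ 2) + frobNorm DS ^ 2) ≤
      t * Real.sqrt ((∑ i, (((A i) * DX).trace) ^ 2) +
        frobNorm ((∑ i, Dy i • A i) + DS) ^ 2 +
        frobNorm ((1 / 2 : ℝ) • (DX * S + S * DX + X * DS + DS * X)) ^ 2)}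

/-- A nonlinearity interval: a non-singleton open subinterval of `int(E)`, of maximal length,
on which `dim B(·)` and `dim N(·)` are constant while the optimal partition `π(·)` varies. -/
def IsNonlinearityInterval (C Cbar : Matrix (Fin n) (Fin n) ℝ)
    (A : Fin m → Matrix (Fin n) (Fin n) ℝ) (b : Fin m → ℝ) (I : Set ℝ) : Prop :=
  I ⊆ interior (Eset C Cbar A b) ∧ IsOpen I ∧ I.OrdConnected ∧
    (∃ a ∈ I, ∃ c ∈ I, a ≠ c) ∧
    (∀ ε ∈ I, ∀ ε' ∈ I, DimsMatch C Cbar A b ε ε') ∧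
    ¬ (∀ ε ∈ I, ∀ ε' ∈ I, SamePartition C Cbar A b ε ε') ∧
    ∀ I' : Set ℝ, I ⊆ I' → I' ⊆ interior (Eset C Cbar A b) → IsOpen I' → I'.OrdConnected →
      (∀ ε ∈ I', ∀ ε' ∈ I', DimsMatch C Cbar A b ε ε') → I' = I

end

/-!
A strict primal feasible point makes the linear functional of the objective extendable, by the
M. Riesz theorem applied to the cone of feasible directions at a primal optimal `X`, to a functional
that is nonnegative on positive semidefinite matrices and vanishes at `X`. That functional is a dual
slack complementary to `X`, so the duality gap is zero and `X * S = 0` for all optimal `X` and `S`.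

Consequently `rank X + rank S ≤ n` for every optimal pair, with equality at a strictly complementary
one. Rank is lower semicontinuous, so along optimal pairs converging to a strictly complementary
pair neither rank can drop, and because the sum is bounded by `n` neither can grow; positive
definiteness of `X + S` is detected by its determinant and persists as well.
-/

section ConicOptimality

variable {E : Type*} [AddCommGroup E] [PartialOrder E] [IsOrderedAddMonoid E] [Module ℝ E]
  [PosSMulMono ℝ E]

/-- The cone of feasible directions at `x` in the positive cone of `E`: for `0 ≤ x`, the cone
generated by the differences `y - x` with `0 ≤ y`. Clearing the step length `1 / r` from
`0 ≤ x + (1 / r) • d` admits `r = 0`, which makes closure under addition immediate. -/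
def feasibleDirections (x : E) : PointedCone ℝ E where
  carrier := {d | ∃ r : ℝ, 0 ≤ r ∧ 0 ≤ r • x + d}
  zero_mem' := ⟨0, le_rfl, by simp⟩
  add_mem' := by
    rintro d e ⟨r, hr, hd⟩ ⟨s, hs, he⟩
    refine ⟨r + s, add_nonneg hr hs, ?_⟩
    simpa only [add_smul, add_add_add_comm] using add_nonneg hd he
  smul_mem' := by
    rintro ⟨t, ht⟩ d ⟨r, hr, hd⟩
    refine ⟨t * r, mul_nonneg ht hr, ?_⟩
    simpa only [mul_smul, smul_add, Nonneg.mk_smul] using smul_nonneg ht hd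

theorem nonneg_of_mem_feasibleDirections_of_isMin {V : Submodule ℝ E} {c : E →ₗ[ℝ] ℝ} {x v : E}
    (hx : 0 ≤ x) (hmin : ∀ w ∈ V, 0 ≤ x + w → 0 ≤ c w) (hv : v ∈ V)
    (hvx : v ∈ feasibleDirections x) : 0 ≤ c v := by
  obtain ⟨r, hr, hrv⟩ := hvx
  have hr' : 0 < r + 1 := by linarith
  have hstep : 0 ≤ x + (r + 1)⁻¹ • v := by
    have h : x + (r + 1)⁻¹ • v = (r + 1)⁻¹ • ((r • x + v) + x) := by
      match_scalars <;> field_simp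
    rw [h]
    exact smul_nonneg (inv_nonneg.2 hr'.le) (add_nonneg hrv hx)
  have hc := hmin _ (V.smul_mem _ hv) hstep
  rw [map_smul, smul_eq_mul] at hc
  exact (mul_nonneg_iff_of_pos_left (inv_pos.2 hr')).1 hc

theorem exists_nonneg_multiplier_of_isMin {V : Submodule ℝ E} {c : E →ₗ[ℝ] ℝ} {x : E}
    (hx : 0 ≤ x) (hmin : ∀ v ∈ V, 0 ≤ x + v → 0 ≤ c v)
    (hslater : ∀ y, ∃ v ∈ V, v + y ∈ feasibleDirections x) :
    ∃ g : E →ₗ[ℝ] ℝ, (∀ y, 0 ≤ y → 0 ≤ g y) ∧ (∀ v ∈ V, g v = c v) ∧ g x = 0 := by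
  obtain ⟨g, hgV, hg⟩ := riesz_extension (feasibleDirections x) (c.toPMap V)
    (fun v => nonneg_of_mem_feasibleDirections_of_isMin hx hmin v.2)
    (fun y => let ⟨v, hv, hvy⟩ := hslater y; ⟨⟨v, hv⟩, hvy⟩)
  have hpos : ∀ y, 0 ≤ y → 0 ≤ g y := fun y hy => hg y ⟨0, le_rfl, by simpa using hy⟩
  have hneg : 0 ≤ g (-x) := hg (-x) ⟨1, zero_le_one, by simp⟩
  rw [map_neg] at hneg
  exact ⟨g, hpos, fun v hv => hgV ⟨v, hv⟩, le_antisymm (by linarith) (hpos x hx)⟩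

end ConicOptimality

section PosSemidef

open scoped MatrixOrder ComplexOrder

variable {ι 𝕜 : Type*} [RCLike 𝕜]

theorem exists_pos_smul_add_posSemidef [Finite ι] {X Y : Matrix ι ι 𝕜} (hX : X.PosDef)
    (hY : Y.IsHermitian) : ∃ r : ℝ, 0 < r ∧ (r • X + Y).PosSemidef := by
  classical
  cases nonempty_fintype ι
  cases isEmpty_or_nonempty ι
  · exact ⟨1, one_pos, by rw [Subsingleton.elim (_ + Y) 0]; exact .zero⟩
  obtain ⟨l, hl, hlX⟩ := (CFC.exists_pos_algebraMap_le_iff hX.1.isSelfAdjoint).2 fun t ht =>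
    hX.isStrictlyPositive.spectrum_pos ht
  obtain ⟨k, hk⟩ := Y.finite_real_spectrum.bddBelow
  have hkY : algebraMap ℝ _ k ≤ Y :=
    (algebraMap_le_iff_le_spectrum (ha := hY.isSelfAdjoint)).2 fun t ht => hk ht
  refine ⟨(|k| + 1) / l, by positivity, ?_⟩
  rw [← nonneg_iff_posSemidef]
  calc (0 : Matrix ι ι 𝕜)
      ≤ algebraMap ℝ _ (|k| + 1 + k) := algebraMap_nonneg _ (by linarith [neg_abs_le k])
    _ = ((|k| + 1) / l) • algebraMap ℝ (Matrix ι ι 𝕜) l + algebraMap ℝ _ k := by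
      rw [map_add, Algebra.smul_def, ← map_mul, div_mul_cancel₀ _ hl.ne']
    _ ≤ ((|k| + 1) / l) • X + Y := by gcongr

variable [Fintype ι]

theorem trace_mul_nonneg_of_posSemidef {S X : Matrix ι ι 𝕜} (hS : S.PosSemidef)
    (hX : X.PosSemidef) : 0 ≤ (S * X).trace := by
  classical
  obtain ⟨D, rfl⟩ := CStarAlgebra.nonneg_iff_eq_star_mul_self.mp hS.nonneg
  rw [star_eq_conjTranspose, Matrix.mul_assoc, trace_mul_comm]
  exact (hX.mul_mul_conjTranspose_same D).trace_nonneg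

theorem mul_eq_zero_of_trace_mul_eq_zero {S X : Matrix ι ι 𝕜} (hS : S.PosSemidef)
    (hX : X.PosSemidef) (h : (S * X).trace = 0) : X * S = 0 := by
  classical
  obtain ⟨B, rfl⟩ := CStarAlgebra.nonneg_iff_eq_star_mul_self.mp hX.nonneg
  obtain ⟨D, rfl⟩ := CStarAlgebra.nonneg_iff_eq_star_mul_self.mp hS.nonneg
  simp only [star_eq_conjTranspose] at h ⊢
  have hBD : B * Dᴴ = 0 := by
    rw [← trace_mul_conjTranspose_self_eq_zero_iff, ← h, trace_mul_comm,
      trace_mul_comm (Dᴴ * D), conjTranspose_mul, conjTranspose_conjTranspose, Matrix.mul_assoc,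
      trace_mul_comm]
    simp only [Matrix.mul_assoc]
  calc Bᴴ * B * (Dᴴ * D) = Bᴴ * (B * Dᴴ) * D := by simp only [Matrix.mul_assoc]
    _ = 0 := by rw [hBD, Matrix.mul_zero, Matrix.zero_mul]

theorem posSemidef_of_forall_trace_mul_nonneg {S : Matrix ι ι 𝕜} (hS : S.IsHermitian)
    (h : ∀ Y : Matrix ι ι 𝕜, Y.PosSemidef → 0 ≤ (S * Y).trace) : S.PosSemidef := by
  refine .of_dotProduct_mulVec_nonneg hS fun x => ?_
  have hx := h _ (posSemidef_vecMulVec_self_star x)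
  rwa [mul_vecMulVec, trace_vecMulVec, dotProduct_comm] at hx

end PosSemidef

section TraceForm

variable {ι R : Type*} [Fintype ι] [CommRing R]

theorem trace_mul_transpose_of_isSymm {M : Matrix ι ι R} (hM : M.IsSymm) (Y : Matrix ι ι R) :
    (M * Yᵀ).trace = (M * Y).trace := by
  rw [← trace_transpose, transpose_mul, transpose_transpose, hM.eq, trace_mul_comm]

/-- The trace form `⟨M, Y⟩ = trace (M * Y)`, as a bilinear form so that sums in the first argument
can be moved through it. -/
def traceForm : LinearMap.BilinForm R (Matrix ι ι R) :=
  (LinearMap.mul R (Matrix ι ι R)).compr₂ (traceLinearMap ι R R)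

theorem traceForm_apply (M Y : Matrix ι ι R) : traceForm M Y = (M * Y).trace := rfl

end TraceForm

section SemidefiniteOptimality

open scoped MatrixOrder

variable {ι κ : Type*} [Fintype ι] {A : κ → Matrix ι ι ℝ} {c X : Matrix ι ι ℝ}

theorem exists_add_mem_feasibleDirections (hA : ∀ i, (A i).IsSymm)
    (hslater : ∃ X₀ : Matrix ι ι ℝ, X₀.PosDef ∧ ∀ i, (A i * X₀).trace = (A i * X).trace)
    (Y : Matrix ι ι ℝ) :
    ∃ V ∈ ⨅ i, LinearMap.ker (traceForm (A i)), V + Y ∈ feasibleDirections X := by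
  obtain ⟨X₀, hX₀, hAX₀⟩ := hslater
  have hsymm : ((1 / 2 : ℝ) • (Y + Yᵀ)).IsHermitian := by
    rw [isHermitian_iff_isSymm]
    exact (isSymm_add_transpose_self Y).smul _
  obtain ⟨r, hr, hrY⟩ := exists_pos_smul_add_posSemidef hX₀ hsymm
  refine ⟨r • (X₀ - X) + (1 / 2 : ℝ) • (Yᵀ - Y), ?_, r, hr.le, ?_⟩
  · simp only [Submodule.mem_iInf, LinearMap.mem_ker, map_add, map_smul, map_sub, traceForm_apply,
      hAX₀, trace_mul_transpose_of_isSymm (hA _), sub_self, smul_zero, add_zero, implies_true]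
  · convert hrY.nonneg using 1
    module

theorem exists_complementary_slack_of_isMin [Fintype κ] (hA : ∀ i, (A i).IsSymm) (hc : c.IsSymm)
    (hX : X.PosSemidef)
    (hmin : ∀ Y : Matrix ι ι ℝ, Y.PosSemidef → (∀ i, (A i * Y).trace = (A i * X).trace) →
      (c * X).trace ≤ (c * Y).trace)
    (hslater : ∃ X₀ : Matrix ι ι ℝ, X₀.PosDef ∧ ∀ i, (A i * X₀).trace = (A i * X).trace) :
    ∃ y : κ → ℝ, (c - ∑ i, y i • A i).PosSemidef ∧ ((c - ∑ i, y i • A i) * X).trace = 0 := by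
  have hminDir : ∀ V ∈ ⨅ i, LinearMap.ker (traceForm (A i)), 0 ≤ X + V → 0 ≤ traceForm c V := by
    intro V hV hXV
    simp only [Submodule.mem_iInf, LinearMap.mem_ker, traceForm_apply] at hV
    have h := hmin (X + V) (nonneg_iff_posSemidef.1 hXV) fun i => by
      rw [Matrix.mul_add, trace_add, hV, add_zero]
    rwa [Matrix.mul_add, trace_add, le_add_iff_nonneg_right] at h
  obtain ⟨g, hg, hgV, hgX⟩ := exists_nonneg_multiplier_of_isMin hX.nonneg hminDir
    (exists_add_mem_feasibleDirections hA hslater)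
  have hspan : traceForm c - g ∈ Submodule.span ℝ (range fun i => traceForm (A i)) :=
    mem_span_of_iInf_ker_le_ker fun V hV => by
      rw [LinearMap.mem_ker, LinearMap.sub_apply, hgV V hV, sub_self]
  obtain ⟨y, hy⟩ := (Submodule.mem_span_range_iff_exists_fun ℝ).1 hspan
  have hg_eq : ∀ Y, ((c - ∑ i, y i • A i) * Y).trace = g Y := fun Y => by
    have hgc : g = traceForm (c - ∑ i, y i • A i) := by
      simp only [map_sub, map_sum, map_smul, hy, sub_sub_cancel]
    rw [hgc, traceForm_apply]
  have hsymm : (c - ∑ i, y i • A i).IsSymm := by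
    simp only [IsSymm, transpose_sub, transpose_sum, transpose_smul, hc.eq, (hA _).eq]
  refine ⟨y, posSemidef_of_forall_trace_mul_nonneg hsymm fun Y hY => ?_, (hg_eq X).trans hgX⟩
  exact (hg_eq Y).symm ▸ hg Y hY.nonneg

end SemidefiniteOptimality

section Rank

open scoped Topology

variable {ι κ 𝕜 : Type*} [Fintype κ]

theorem rank_add_le_rank_add_rank [Field 𝕜] (M N : Matrix ι κ 𝕜) :
    (M + N).rank ≤ M.rank + N.rank := by
  have h := LinearMap.rank_add_le M.mulVecLin N.mulVecLin
  rw [← mulVecLin_add] at h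
  simp only [LinearMap.rank, ← Module.finrank_eq_rank] at h
  exact_mod_cast h

theorem eventually_rank_le_rank [Finite ι] [NontriviallyNormedField 𝕜] [CompleteSpace 𝕜]
    (M : Matrix ι κ 𝕜) :
    ∀ᶠ N in 𝓝 M, M.rank ≤ N.rank := by
  classical
  cases nonempty_fintype ι
  let toCLM : Matrix ι κ 𝕜 →ₗ[𝕜] (κ → 𝕜) →L[𝕜] (ι → 𝕜) :=
    LinearMap.toContinuousLinearMap.toLinearMap ∘ₗ toLin'.toLinearMap
  have hrank (N : Matrix ι κ 𝕜) : (toCLM N : (κ → 𝕜) →ₗ[𝕜] (ι → 𝕜)).rank = N.rank := by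
    rw [Matrix.rank, Module.finrank_eq_rank]
    rfl
  have hopen := (isOpen_setOfPred_nat_le_rank (𝕜 := 𝕜) (E := κ → 𝕜) (F := ι → 𝕜) M.rank).preimage
    toCLM.continuous_of_finiteDimensional
  simpa [hrank] using hopen.eventually_mem (show M ∈ _ by simp [hrank])

variable [Fintype ι]

theorem rank_eq_of_mul_eq_zero_of_isUnit_add [DecidableEq ι] [Field 𝕜]
    {X S X₀ S₀ : Matrix ι ι 𝕜} (h₀ : IsUnit (X₀ + S₀)) (hXS : X * S = 0)
    (hX : X₀.rank ≤ X.rank) (hS : S₀.rank ≤ S.rank) : X.rank = X₀.rank ∧ S.rank = S₀.rank := by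
  have hcard : Fintype.card ι ≤ X₀.rank + S₀.rank :=
    (rank_of_isUnit _ h₀).symm.trans_le (rank_add_le_rank_add_rank X₀ S₀)
  have hsum := rank_add_rank_le_card_of_mul_eq_zero hXS
  omega

theorem rank_eq_of_mul_eq_zero_of_isUnit_add_of_isUnit_add [DecidableEq ι] [Field 𝕜]
    {X S X₀ S₀ : Matrix ι ι 𝕜} (h : IsUnit (X + S)) (h₀ : IsUnit (X₀ + S₀)) (hXS₀ : X * S₀ = 0)
    (hX₀S : X₀ * S = 0) : X.rank = X₀.rank ∧ S.rank = S₀.rank := by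
  have hcard := (rank_of_isUnit _ h).symm.trans_le (rank_add_le_rank_add_rank X S)
  have hcard₀ := (rank_of_isUnit _ h₀).symm.trans_le (rank_add_le_rank_add_rank X₀ S₀)
  have hsum := rank_add_rank_le_card_of_mul_eq_zero hXS₀
  have hsum₀ := rank_add_rank_le_card_of_mul_eq_zero hX₀S
  omega

open scoped ComplexOrder in
theorem eventually_posDef_add_and_rank_eq [RCLike 𝕜] {X₀ S₀ : Matrix ι ι 𝕜}
    (h₀ : (X₀ + S₀).PosDef) :
    ∀ᶠ p in 𝓝 (X₀, S₀), p.1.PosSemidef → p.2.PosSemidef → p.1 * p.2 = 0 →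
      (p.1 + p.2).PosDef ∧ p.1.rank = X₀.rank ∧ p.2.rank = S₀.rank := by
  classical
  have hdet : ∀ᶠ p : Matrix ι ι 𝕜 × Matrix ι ι 𝕜 in 𝓝 (X₀, S₀), (p.1 + p.2).det ≠ 0 :=
    (by fun_prop : Continuous fun p : Matrix ι ι 𝕜 × Matrix ι ι 𝕜 => (p.1 + p.2).det)
      |>.continuousAt.eventually_ne h₀.det_pos.ne'
  filter_upwards [hdet, continuous_fst.continuousAt.eventually (eventually_rank_le_rank X₀),
    continuous_snd.continuousAt.eventually (eventually_rank_le_rank S₀)]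
    with p hp hpX hpS hX hS hXS
  exact ⟨(hX.add hS).posDef_iff_det_ne_zero.2 hp,
    rank_eq_of_mul_eq_zero_of_isUnit_add h₀.isUnit hXS hpX hpS⟩

end Rank

theorem mul_eq_zero_of_mem_primalOpt_of_mem_dualOpt {n m : ℕ} {C Cbar : Matrix (Fin n) (Fin n) ℝ}
    {A : Fin m → Matrix (Fin n) (Fin n) ℝ} {b : Fin m → ℝ} (hC : C.IsSymm) (hCbar : Cbar.IsSymm)
    (hA : ∀ i, (A i).IsSymm) (hslater : ∃ X₀, PrimalFeasible A b X₀ ∧ X₀.PosDef) {ε : ℝ}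
    {X S : Matrix (Fin n) (Fin n) ℝ} {y : Fin m → ℝ} (hP : X ∈ PrimalOpt C Cbar A b ε)
    (hD : (y, S) ∈ DualOpt C Cbar A b ε) : X * S = 0 := by
  obtain ⟨⟨-, hAX, hX⟩, hXmin⟩ := hP
  obtain ⟨⟨-, hyS, hS⟩, hymax⟩ := hD
  obtain ⟨X₀, ⟨-, hAX₀, -⟩, hX₀⟩ := hslater
  obtain ⟨z, hZ, hZX⟩ := exists_complementary_slack_of_isMin hA (hC.add (hCbar.smul ε)) hX
    (fun Y hY hAY => hXmin Y ⟨hY.1, fun i => (hAY i).trans (hAX i), hY⟩)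
    ⟨X₀, hX₀, fun i => (hAX₀ i).trans (hAX i).symm⟩
  have hgap (w : Fin m → ℝ) (W : Matrix (Fin n) (Fin n) ℝ)
      (hw : ∑ i, w i • A i + W = C + ε • Cbar) :
      (W * X).trace = ((C + ε • Cbar) * X).trace - ∑ i, b i * w i := by
    simp [← hw, Matrix.add_mul, Finset.sum_mul, trace_sum, hAX, mul_comm]
  have hzy := hymax z _ ⟨hZ.1, add_sub_cancel _ _, hZ⟩
  rw [hgap z _ (add_sub_cancel _ _)] at hZX
  have hSX := hgap y S hyS
  have hSX_nonneg := trace_mul_nonneg_of_posSemidef hS hX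
  exact mul_eq_zero_of_trace_mul_eq_zero hS hX (by linarith)

theorem stmt5_general {n m : ℕ} (C Cbar : Matrix (Fin n) (Fin n) ℝ)
    (A : Fin m → Matrix (Fin n) (Fin n) ℝ) (b : Fin m → ℝ)
    (hC : C.IsSymm) (hCbar : Cbar.IsSymm) (hA : ∀ i, (A i).IsSymm)
    (hslater : ∃ X₀, PrimalFeasible A b X₀ ∧ X₀.PosDef)
    (εbar : ℝ) (hεbar : εbar ∈ interior (Eset C Cbar A b))
    (Xs Ss : Matrix (Fin n) (Fin n) ℝ) (ys : Fin m → ℝ)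
    (hoptP : Xs ∈ PrimalOpt C Cbar A b εbar)
    (hoptD : (ys, Ss) ∈ DualOpt C Cbar A b εbar)
    (hsc : (Xs + Ss).PosDef)
    (hconv : ∀ εk : ℕ → ℝ, (∀ k, εk k ∈ interior (Eset C Cbar A b)) →
      Filter.Tendsto εk Filter.atTop (nhds εbar) →
      ∃ (Xk : ℕ → Matrix (Fin n) (Fin n) ℝ) (yk : ℕ → Fin m → ℝ)
          (Sk : ℕ → Matrix (Fin n) (Fin n) ℝ)
          (X₀ : Matrix (Fin n) (Fin n) ℝ) (y₀ : Fin m → ℝ) (S₀ : Matrix (Fin n) (Fin n) ℝ),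
        (∀ k, Xk k ∈ PrimalOpt C Cbar A b (εk k) ∧ (yk k, Sk k) ∈ DualOpt C Cbar A b (εk k)) ∧
        (X₀ ∈ PrimalOpt C Cbar A b εbar ∧ (y₀, S₀) ∈ DualOpt C Cbar A b εbar ∧
          (X₀ + S₀).PosDef) ∧
        Filter.Tendsto (fun k => (Xk k, Sk k)) Filter.atTop (nhds (X₀, S₀))) :
    ∃ ξ : ℝ, 0 < ξ ∧ Set.Ioo (εbar - ξ) (εbar + ξ) ⊆ interior (Eset C Cbar A b) ∧
      ∀ ε ∈ Set.Ioo (εbar - ξ) (εbar + ξ),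
        ∃ (X S : Matrix (Fin n) (Fin n) ℝ) (y : Fin m → ℝ),
          X ∈ PrimalOpt C Cbar A b ε ∧ (y, S) ∈ DualOpt C Cbar A b ε ∧ (X + S).PosDef ∧
          Module.finrank ℝ (LinearMap.range X.mulVecLin) =
            Module.finrank ℝ (LinearMap.range Xs.mulVecLin) ∧
          Module.finrank ℝ (LinearMap.range S.mulVecLin) =
            Module.finrank ℝ (LinearMap.range Ss.mulVecLin) := by
  have hint := isOpen_interior.eventually_mem hεbar
  suffices hgood : ∀ᶠ ε in nhds εbar, ∃ (X S : Matrix (Fin n) (Fin n) ℝ) (y : Fin m → ℝ),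
      X ∈ PrimalOpt C Cbar A b ε ∧ (y, S) ∈ DualOpt C Cbar A b ε ∧ (X + S).PosDef ∧
        X.rank = Xs.rank ∧ S.rank = Ss.rank by
    obtain ⟨ξ, hξ, hball⟩ := Metric.eventually_nhds_iff_ball.1 (hint.and hgood)
    rw [Real.ball_eq_Ioo] at hball
    exact ⟨ξ, hξ, fun ε hε => (hball ε hε).1, fun ε hε => (hball ε hε).2⟩
  by_contra hbad
  obtain ⟨εk, hlim, hεk⟩ := Filter.exists_seq_forall_of_frequently
    ((Filter.not_eventually.1 hbad).and_eventually hint)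
  obtain ⟨Xk, yk, Sk, X₀, y₀, S₀, hopt, ⟨hP₀, hD₀, hsc₀⟩, htends⟩ :=
    hconv εk (fun k => (hεk k).2) hlim
  have hcompl {ε X S y} := mul_eq_zero_of_mem_primalOpt_of_mem_dualOpt hC hCbar hA hslater
    (ε := ε) (X := X) (S := S) (y := y)
  obtain ⟨hX₀, hS₀⟩ := rank_eq_of_mul_eq_zero_of_isUnit_add_of_isUnit_add hsc₀.isUnit hsc.isUnit
    (hcompl hP₀ hoptD) (hcompl hoptP hD₀)
  obtain ⟨k, hk⟩ := (htends.eventually (eventually_posDef_add_and_rank_eq hsc₀)).exists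
  obtain ⟨hP, hD⟩ := hopt k
  obtain ⟨hpd, hX, hS⟩ := hk hP.1.2.2 hD.1.2.2 (hcompl hP hD)
  exact (hεk k).1 ⟨Xk k, Sk k, yk k, hP, hD, hpd, hX.trans hX₀, hS.trans hS₀⟩

/-- convergence of optimal solutions to a strictly complementary solution at `ε̄`
implies that `ε̄` lies in an open interval with strictly complementary solutions and constant
`dim B(·)`, `dim N(·)`. -/
theorem stmt5 {n m : ℕ} (C Cbar : Matrix (Fin n) (Fin n) ℝ)
    (A : Fin m → Matrix (Fin n) (Fin n) ℝ) (b : Fin m → ℝ)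
    (hSA : StandingAssumptions C Cbar A b)
    (εbar : ℝ) (hεbar : εbar ∈ interior (Eset C Cbar A b))
    (Xs Ss : Matrix (Fin n) (Fin n) ℝ) (ys : Fin m → ℝ)
    (hoptP : Xs ∈ PrimalOpt C Cbar A b εbar)
    (hoptD : (ys, Ss) ∈ DualOpt C Cbar A b εbar)
    (hsc : (Xs + Ss).PosDef)
    (hconv : ∀ εk : ℕ → ℝ, (∀ k, εk k ∈ interior (Eset C Cbar A b)) →
      Filter.Tendsto εk Filter.atTop (nhds εbar) →
      ∃ (Xk : ℕ → Matrix (Fin n) (Fin n) ℝ) (yk : ℕ → Fin m → ℝ)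
          (Sk : ℕ → Matrix (Fin n) (Fin n) ℝ),
        (∀ k, Xk k ∈ PrimalOpt C Cbar A b (εk k) ∧ (yk k, Sk k) ∈ DualOpt C Cbar A b (εk k)) ∧
        Filter.Tendsto (fun k => (Xk k, yk k, Sk k)) Filter.atTop (nhds (Xs, ys, Ss))) :
    ∃ ξ : ℝ, 0 < ξ ∧ Set.Ioo (εbar - ξ) (εbar + ξ) ⊆ interior (Eset C Cbar A b) ∧
      ∀ ε ∈ Set.Ioo (εbar - ξ) (εbar + ξ),
        ∃ (X S : Matrix (Fin n) (Fin n) ℝ) (y : Fin m → ℝ),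
          X ∈ PrimalOpt C Cbar A b ε ∧ (y, S) ∈ DualOpt C Cbar A b ε ∧ (X + S).PosDef ∧
          Module.finrank ℝ (LinearMap.range X.mulVecLin) =
            Module.finrank ℝ (LinearMap.range Xs.mulVecLin) ∧
          Module.finrank ℝ (LinearMap.range S.mulVecLin) =
            Module.finrank ℝ (LinearMap.range Ss.mulVecLin) := by
  obtain ⟨hC, hCbar, hA, -, X₀, -, -, hX₀, hX₀pos, -⟩ := hSA
  refine stmt5_general C Cbar A b hC hCbar hA ⟨X₀, hX₀, hX₀pos⟩ εbar hεbar Xs Ss ys hoptP hoptD hsc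
    fun εk hεk hlim => ?_
  obtain ⟨Xk, yk, Sk, hopt, htends⟩ := hconv εk hεk hlim
  exact ⟨Xk, yk, Sk, Xs, ys, Ss, hopt, ⟨hoptP, hoptD, hsc⟩,
    htends.fst_nhds.prodMk_nhds htends.snd_nhds.snd_nhds⟩
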